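/- Let p be an odd prime and let a ∈ ZMod p satisfy a² ≠ 4. Let A ∈ SL(2,p) be the companion matrix with rows (0,−1) and (1,a). Then there exists S ∈ SL(2,p) such that S·A·S⁻¹ = A⁻¹. -/

import Mathlib

open Matrix

/-!
A matrix `T ∈ SL₂` of trace zero satisfies `T⁻¹ = -T` by Cayley–Hamilton. Hence if both `S` and
`S * A` have trace zero, then `S * A * S⁻¹ = A⁻¹`. The trace-zero matrices `S` with
`trace (S * A) = 0` form a plane on which `det` is a binary quadratic form, of discriminant
`(trace A) ^ 2 - 4` up to a square factor. When this is nonzero, the form represents every element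
of a finite field, and in particular `1`.
-/

section TraceZero

variable {R : Type*} [CommRing R]

theorem adjugate_fin_two_eq_neg_of_trace_eq_zero {T : Matrix (Fin 2) (Fin 2) R}
    (hT : trace T = 0) : adjugate T = -T := by
  rw [trace_fin_two] at hT
  rw [adjugate_fin_two]
  ext i j
  fin_cases i <;> fin_cases j <;> simp <;> linear_combination hT

theorem inv_eq_neg_of_trace_eq_zero {T : SpecialLinearGroup (Fin 2) R}
    (hT : trace (T : Matrix (Fin 2) (Fin 2) R) = 0) : T⁻¹ = -T :=
  Subtype.ext (adjugate_fin_two_eq_neg_of_trace_eq_zero hT)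

theorem conj_eq_inv_of_trace_eq_zero {S A : SpecialLinearGroup (Fin 2) R}
    (hS : trace (S : Matrix (Fin 2) (Fin 2) R) = 0)
    (hSA : trace (S * A : Matrix (Fin 2) (Fin 2) R) = 0) : S * A * S⁻¹ = A⁻¹ := by
  have hSA_inv : (S * A)⁻¹ = -(S * A) := inv_eq_neg_of_trace_eq_zero hSA
  calc S * A * S⁻¹ = -(S * A) * S := by
        rw [inv_eq_neg_of_trace_eq_zero hS, mul_neg, neg_mul]
    _ = A⁻¹ := by rw [← hSA_inv, _root_.mul_inv_rev, inv_mul_cancel_right]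

end TraceZero

section FiniteField

variable {F : Type*} [Field F] [Finite F]

open Polynomial in
theorem exists_mul_sq_add_mul_sq_eq {a b : F} (ha : a ≠ 0) (hb : b ≠ 0) (hF : ringChar F ≠ 2)
    (t : F) : ∃ x y : F, a * x ^ 2 + b * y ^ 2 = t := by
  have := Fintype.ofFinite F
  obtain ⟨x, y, hxy⟩ := FiniteField.exists_root_sum_quadratic
    (degree_quadratic (b := 0) (c := 0) ha) (degree_quadratic (b := 0) (c := -t) hb)
    (FiniteField.odd_card_of_char_ne_two hF)
  simp only [eval_add, eval_mul, eval_pow, eval_C, eval_X] at hxy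
  exact ⟨x, y, by linear_combination hxy⟩

theorem exists_binary_quadratic_form_eq {a b c : F} (ha : a ≠ 0) (hdisc : discrim a b c ≠ 0)
    (t : F) : ∃ x y : F, a * x ^ 2 + b * x * y + c * y ^ 2 = t := by
  by_cases hF : ringChar F = 2
  · obtain ⟨x, hx⟩ := FiniteField.isSquare_of_char_two hF (t / a)
    rw [div_eq_iff ha] at hx
    exact ⟨x, 0, by linear_combination -hx⟩
  · have h_two : (2 : F) ≠ 0 := Ring.two_ne_zero hF
    obtain ⟨u, y, huy⟩ := exists_mul_sq_add_mul_sq_eq one_ne_zero (neg_ne_zero.mpr hdisc) hF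
      (4 * a * t)
    obtain ⟨x, rfl⟩ : ∃ x, u = 2 * a * x + b * y := ⟨(u - b * y) / (2 * a), by field_simp; ring⟩
    refine ⟨x, y, mul_left_cancel₀ (mul_ne_zero (mul_ne_zero h_two h_two) ha) ?_⟩
    rw [discrim] at huy
    linear_combination huy

theorem exists_neg_sq_sub_mul_eq_one_and_linear_eq_zero {e b c : F}
    (hdisc : e ^ 2 + 4 * b * c ≠ 0) :
    ∃ x y z : F, -x ^ 2 - y * z = 1 ∧ x * e + y * c + z * b = 0 := by
  by_cases hc : c = 0
  · have he : e ≠ 0 := by simpa [hc] using hdisc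
    exact ⟨-b / e, -1 - (-b / e) ^ 2, 1, by ring, by rw [hc]; field_simp; ring⟩
  · have hdisc' : discrim c (-e) (-b) ≠ 0 := by
      rw [discrim]
      convert hdisc using 1
      ring
    obtain ⟨x, z, hxz⟩ := exists_binary_quadratic_form_eq hc hdisc' (-c)
    obtain ⟨y, hy⟩ : ∃ y, x * e + y * c + z * b = 0 :=
      ⟨-(x * e + z * b) / c, by field_simp; ring⟩
    exact ⟨x, y, z, mul_left_cancel₀ hc (by linear_combination -hxz - z * hy), hy⟩

theorem exists_trace_eq_zero_and_trace_mul_eq_zero {A : Matrix (Fin 2) (Fin 2) F}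
    (hA : trace A ^ 2 ≠ 4 * det A) :
    ∃ S : SpecialLinearGroup (Fin 2) F, trace (S : Matrix (Fin 2) (Fin 2) F) = 0 ∧
      trace (S * A : Matrix (Fin 2) (Fin 2) F) = 0 := by
  have hdisc : (A 0 0 - A 1 1) ^ 2 + 4 * A 0 1 * A 1 0 ≠ 0 := by
    rw [trace_fin_two, det_fin_two] at hA
    exact fun h => hA (by linear_combination h)
  obtain ⟨x, y, z, hdet, hplane⟩ := exists_neg_sq_sub_mul_eq_one_and_linear_eq_zero hdisc
  refine ⟨⟨!![x, y; z, -x], by rw [det_fin_two_of]; linear_combination hdet⟩, ?_, ?_⟩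
  · simp [trace_fin_two]
  · simp only [trace_fin_two, mul_apply, Fin.sum_univ_two, of_apply, cons_val_zero, cons_val_one]
    linear_combination hplane

end FiniteField

theorem stmt_8_general {F : Type*} [Field F] [Finite F] (A : SpecialLinearGroup (Fin 2) F)
    (hA : trace (A : Matrix (Fin 2) (Fin 2) F) ^ 2 ≠ 4) :
    ∃ S : SpecialLinearGroup (Fin 2) F, S * A * S⁻¹ = A⁻¹ :=
  let ⟨S, hS, hSA⟩ := exists_trace_eq_zero_and_trace_mul_eq_zero (by rwa [A.det_coe, mul_one])
  ⟨S, conj_eq_inv_of_trace_eq_zero hS hSA⟩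

/-- For an odd prime `p` and `a ∈ 𝔽_p` with `a² ≠ 4`, the companion matrix
`A = [[0,−1],[1,a]] ∈ SL(2,p)` is conjugate to its inverse inside `SL(2,p)`. -/
theorem stmt_8 (p : ℕ) (hp : p.Prime) (hodd : Odd p) (a : ZMod p) (ha : a ^ 2 ≠ 4)
    (A : SpecialLinearGroup (Fin 2) (ZMod p))
    (hA : (A : Matrix (Fin 2) (Fin 2) (ZMod p)) = !![0, -1; 1, a]) :
    ∃ S : SpecialLinearGroup (Fin 2) (ZMod p), S * A * S⁻¹ = A⁻¹ :=
  have : Fact p.Prime := ⟨hp⟩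
  stmt_8_general A (by simpa [hA, trace_fin_two] using ha)
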